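/- Let a, b ≥ 1 and let μ₋, μ₊ = ((√b ∓ √(a(a+b-1)))/(a+b))². For every real z > 1, ∫_{μ₋}^{μ₊} (1/(z-x)) · (a+b)√((μ₊-x)(x-μ₋))/(2πx(1-x)) dx = (1 - a + (a+b-2)z - √((a + 1 - (a+b)z)² - 4a(1-z)))/(2z(1-z)). -/

import Mathlib

open Real

/-!
Partial fractions of `1 / (x (1 - x) (z - x))` reduce the integral to Cauchy transforms of the
semicircle `√((μ₊ - x)(x - μ₋))` at the three points `0`, `1` and `z`, none of which lies inside the
support. At a point `w` the semicircle contributes a linear function of `w` and the square root of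
`(w - μ₋)(w - μ₊)`; the linear parts cancel, and at the two poles `w = 0` and `w = 1` of the density
the quadratic equals `((a - 1) / (a + b))²` and `((b - 1) / (a + b))²`. Translating and reflecting
the semicircle leaves a single integral, `∫ √(r² - u²) / (c - u)` over `[-r, r]` with `r ≤ c`, which
has an explicit primitive.
-/

section Semicircle

open Set MeasureTheory

theorem hasDerivAt_arcsin_of_sq_add_sq_eq_one {f : ℝ → ℝ} {f' x d : ℝ} (hf : HasDerivAt f f' x)
    (hd : 0 < d) (h : f x ^ 2 + d ^ 2 = 1) :
    HasDerivAt (fun y ↦ arcsin (f y)) (f' / d) x := by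
  have hcos : √(1 - f x ^ 2) = d := by rw [← h, add_sub_cancel_left, sqrt_sq hd.le]
  have harcsin : HasDerivAt arcsin (1 / d) (f x) :=
    hcos ▸ hasDerivAt_arcsin (by nlinarith) (by nlinarith)
  exact (harcsin.comp x hf).congr_deriv (one_div_mul_eq_div d f')

theorem hasDerivAt_arcsin_div {r u : ℝ} (hu : u ∈ Ioo (-r) r) :
    HasDerivAt (fun u ↦ arcsin (u / r)) (1 / √(r ^ 2 - u ^ 2)) u := by
  have hr : 0 < r := by linarith [hu.1, hu.2]
  have hq : 0 < r ^ 2 - u ^ 2 := by nlinarith [hu.1, hu.2]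
  have hsum : (u / r) ^ 2 + (√(r ^ 2 - u ^ 2) / r) ^ 2 = 1 := by
    rw [div_pow, div_pow, sq_sqrt hq.le]
    field_simp
    ring
  refine (hasDerivAt_arcsin_of_sq_add_sq_eq_one ((hasDerivAt_id u).div_const r)
    (by positivity) hsum).congr_deriv ?_
  field_simp

theorem hasDerivAt_arcsin_mobius {r c u : ℝ} (hc : r < c) (hu : u ∈ Ioo (-r) r) :
    HasDerivAt (fun u ↦ arcsin ((c * u - r ^ 2) / (r * (c - u))))
      (√(c ^ 2 - r ^ 2) / ((c - u) * √(r ^ 2 - u ^ 2))) u := by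
  obtain ⟨hu₁, hu₂⟩ := hu
  have hr : 0 < r := by linarith
  have hcu : 0 < c - u := by linarith
  have hq : 0 < r ^ 2 - u ^ 2 := by nlinarith
  have hD : 0 < c ^ 2 - r ^ 2 := by nlinarith
  have hsum : ((c * u - r ^ 2) / (r * (c - u))) ^ 2
      + (√(c ^ 2 - r ^ 2) * √(r ^ 2 - u ^ 2) / (r * (c - u))) ^ 2 = 1 := by
    rw [div_pow, div_pow, mul_pow √_, sq_sqrt hD.le, sq_sqrt hq.le]
    field_simp
    ring
  have hquot : HasDerivAt (fun u ↦ (c * u - r ^ 2) / (r * (c - u)))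
      ((c ^ 2 - r ^ 2) / (r * (c - u) ^ 2)) u := by
    have hnum : HasDerivAt (fun u ↦ c * u - r ^ 2) c u := by
      simpa using ((hasDerivAt_id u).const_mul c).sub_const (r ^ 2)
    have hden : HasDerivAt (fun u ↦ r * (c - u)) (-r) u := by
      simpa using ((hasDerivAt_id u).const_sub c).const_mul r
    refine (hnum.div hden (by positivity)).congr_deriv ?_
    field_simp
    ring
  refine (hasDerivAt_arcsin_of_sq_add_sq_eq_one hquot (by positivity) hsum).congr_deriv ?_
  have hDsq := sq_sqrt hD.le
  field_simp
  rw [hDsq]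

/-- A primitive of `u ↦ √(r² - u²) / (c - u)` on `[-r, r]`, for `r ≤ c`. At `c = r` the last
factor jumps at `u = r`, but its coefficient is zero. -/
noncomputable def semicirclePrimitive (r c u : ℝ) : ℝ :=
  c * arcsin (u / r) - √(r ^ 2 - u ^ 2)
    - √(c ^ 2 - r ^ 2) * arcsin ((c * u - r ^ 2) / (r * (c - u)))

theorem continuousOn_semicirclePrimitive {r c : ℝ} (hr : 0 < r) (hc : r ≤ c) :
    ContinuousOn (semicirclePrimitive r c) (Icc (-r) r) := by
  have hreg : Continuous fun u ↦ c * arcsin (u / r) - √(r ^ 2 - u ^ 2) :=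
    ((continuous_arcsin.comp (continuous_id.div_const r)).const_mul c).sub (by fun_prop)
  refine hreg.continuousOn.sub ?_
  rcases hc.eq_or_lt with rfl | hc
  · simpa using continuousOn_const
  · refine continuousOn_const.mul (continuous_arcsin.comp_continuousOn
      (ContinuousOn.div (by fun_prop) (by fun_prop) fun u hu ↦ ?_))
    exact mul_ne_zero hr.ne' (by linarith [hu.2])

theorem hasDerivAt_semicirclePrimitive {r c u : ℝ} (hc : r ≤ c) (hu : u ∈ Ioo (-r) r) :
    HasDerivAt (semicirclePrimitive r c) (√(r ^ 2 - u ^ 2) / (c - u)) u := by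
  have hcu : 0 < c - u := by linarith [hu.2]
  have hq : 0 < r ^ 2 - u ^ 2 := by nlinarith [hu.1, hu.2]
  have hsqrt : HasDerivAt (fun u ↦ √(r ^ 2 - u ^ 2)) (-u / √(r ^ 2 - u ^ 2)) u := by
    refine (((hasDerivAt_pow 2 u).const_sub (r ^ 2)).sqrt hq.ne').congr_deriv ?_
    field_simp
    norm_num
  have hmobius : HasDerivAt
      (fun u ↦ √(c ^ 2 - r ^ 2) * arcsin ((c * u - r ^ 2) / (r * (c - u))))
      ((c ^ 2 - r ^ 2) / ((c - u) * √(r ^ 2 - u ^ 2))) u := by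
    rcases hc.eq_or_lt with rfl | hc
    · simpa using hasDerivAt_const u (0 : ℝ)
    · have hD : 0 ≤ c ^ 2 - r ^ 2 := by nlinarith [hu.1, hu.2]
      refine ((hasDerivAt_arcsin_mobius hc hu).const_mul _).congr_deriv ?_
      rw [← mul_div_assoc, mul_self_sqrt hD]
  refine ((((hasDerivAt_arcsin_div hu).const_mul c).sub hsqrt).sub hmobius).congr_deriv ?_
  have hqsq := sq_sqrt hq.le
  field_simp
  rw [hqsq]
  ring

theorem semicirclePrimitive_sub_neg {r c : ℝ} (hr : 0 < r) (hc : r ≤ c) :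
    semicirclePrimitive r c r - semicirclePrimitive r c (-r) = π * (c - √(c ^ 2 - r ^ 2)) := by
  have hmobius : √(c ^ 2 - r ^ 2) * arcsin ((c * r - r ^ 2) / (r * (c - r)))
      - √(c ^ 2 - r ^ 2) * arcsin ((c * -r - r ^ 2) / (r * (c - -r)))
      = π * √(c ^ 2 - r ^ 2) := by
    rcases hc.eq_or_lt with rfl | hc
    · simp
    · have hsub : c - r ≠ 0 := by linarith
      have hadd : c - -r ≠ 0 := by linarith
      have hright : (c * r - r ^ 2) / (r * (c - r)) = 1 := by field_simp
      have hleft : (c * -r - r ^ 2) / (r * (c - -r)) = -1 := by field_simp; ring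
      rw [hright, hleft, arcsin_one, arcsin_neg_one]
      ring
  simp only [semicirclePrimitive, neg_sq, sub_self, sqrt_zero, neg_div, div_self hr.ne',
    arcsin_one, arcsin_neg_one]
  linear_combination -hmobius

theorem intervalIntegrable_sqrt_sq_sub_sq_div_sub {r c : ℝ} (hr : 0 ≤ r) (hc : r ≤ c) :
    IntervalIntegrable (fun u ↦ √(r ^ 2 - u ^ 2) / (c - u)) volume (-r) r := by
  rcases hr.eq_or_lt with rfl | hr
  · simp
  have hle : -r ≤ r := by linarith
  rw [intervalIntegrable_iff_integrableOn_Ioc_of_le hle]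
  exact intervalIntegral.integrableOn_deriv_of_nonneg (continuousOn_semicirclePrimitive hr hc)
    (fun u hu ↦ hasDerivAt_semicirclePrimitive hc hu)
    fun u hu ↦ div_nonneg (sqrt_nonneg _) (by linarith [hu.2])

theorem integral_sqrt_sq_sub_sq_div_sub {r c : ℝ} (hr : 0 ≤ r) (hc : r ≤ c) :
    ∫ u in (-r)..r, √(r ^ 2 - u ^ 2) / (c - u) = π * (c - √(c ^ 2 - r ^ 2)) := by
  rcases hr.eq_or_lt with rfl | hr
  · simp [sqrt_sq hc]
  rw [intervalIntegral.integral_eq_sub_of_hasDerivAt_of_le (by linarith)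
    (continuousOn_semicirclePrimitive hr hc) (fun u hu ↦ hasDerivAt_semicirclePrimitive hc hu)
    (intervalIntegrable_sqrt_sq_sub_sq_div_sub hr.le hc), semicirclePrimitive_sub_neg hr hc]

variable {m p w : ℝ}

theorem sqrt_div_sub_eq_centered (m p w x : ℝ) :
    √((p - x) * (x - m)) / (w - x) =
      √(((p - m) / 2) ^ 2 - (x - (m + p) / 2) ^ 2) / (w - (m + p) / 2 - (x - (m + p) / 2)) := by
  rw [sub_sub_sub_cancel_right]
  congr 2
  ring

theorem intervalIntegrable_sqrt_div_sub (hmp : m ≤ p) (hw : p ≤ w) :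
    IntervalIntegrable (fun x ↦ √((p - x) * (x - m)) / (w - x)) volume m p := by
  have hcentered := (intervalIntegrable_sqrt_sq_sub_sq_div_sub (r := (p - m) / 2)
    (c := w - (m + p) / 2) (by linarith) (by linarith)).comp_sub_right ((m + p) / 2)
  simp only [sqrt_div_sub_eq_centered m p w]
  convert hcentered using 1 <;> ring

theorem integral_sqrt_div_sub (hmp : m ≤ p) (hw : p ≤ w) :
    ∫ x in m..p, √((p - x) * (x - m)) / (w - x)
      = π * (w - (m + p) / 2 - √((w - m) * (w - p))) := by
  have hm : m - (m + p) / 2 = -((p - m) / 2) := by ring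
  have hp : p - (m + p) / 2 = (p - m) / 2 := by ring
  simp only [sqrt_div_sub_eq_centered m p w]
  rw [intervalIntegral.integral_comp_sub_right
      (fun u ↦ √(((p - m) / 2) ^ 2 - u ^ 2) / (w - (m + p) / 2 - u)), hm, hp,
    integral_sqrt_sq_sub_sq_div_sub (by linarith) (by linarith)]
  congr 3
  ring

theorem sqrt_div_sub_eq_reflected (m p w x : ℝ) :
    √((p - x) * (x - m)) / (x - w) = √((-m - -x) * (-x - -p)) / (-w - -x) := by
  rw [neg_sub_neg, neg_sub_neg, neg_sub_neg, mul_comm (x - m)]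

theorem intervalIntegrable_sqrt_div_sub_of_le_left (hmp : m ≤ p) (hw : w ≤ m) :
    IntervalIntegrable (fun x ↦ √((p - x) * (x - m)) / (x - w)) volume m p := by
  simp only [sqrt_div_sub_eq_reflected m p w]
  simpa using ((intervalIntegrable_sqrt_div_sub (neg_le_neg hmp) (neg_le_neg hw)).comp_sub_left
    0).symm

theorem integral_sqrt_div_sub_of_le_left (hmp : m ≤ p) (hw : w ≤ m) :
    ∫ x in m..p, √((p - x) * (x - m)) / (x - w)
      = π * ((m + p) / 2 - w - √((w - m) * (w - p))) := by
  simp only [sqrt_div_sub_eq_reflected m p w]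
  rw [intervalIntegral.integral_comp_neg (fun y ↦ √((-m - y) * (y - -p)) / (-w - y)),
    integral_sqrt_div_sub (neg_le_neg hmp) (neg_le_neg hw)]
  ring_nf

theorem integral_sqrt_div_mul_mul {l z : ℝ} (hmp : m ≤ p) (hl : l ≤ m) (hw : p ≤ w) (hz : p ≤ z)
    (hlw : l ≠ w) (hlz : l ≠ z) (hwz : w ≠ z) :
    ∫ x in m..p, √((p - x) * (x - m)) / ((x - l) * (w - x) * (z - x))
      = π * (√((z - m) * (z - p)) / ((z - l) * (z - w))
          - √((w - m) * (w - p)) / ((w - l) * (z - w))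
          - √((l - m) * (l - p)) / ((w - l) * (z - l))) := by
  have hwl : w - l ≠ 0 := sub_ne_zero.2 hlw.symm
  have hzl : z - l ≠ 0 := sub_ne_zero.2 hlz.symm
  have hzw : z - w ≠ 0 := sub_ne_zero.2 hwz.symm
  have partial_fractions : EqOn
      (fun x ↦ √((p - x) * (x - m)) / ((x - l) * (w - x) * (z - x)))
      (fun x ↦ 1 / ((w - l) * (z - l)) * (√((p - x) * (x - m)) / (x - l))
        + 1 / ((w - l) * (z - w)) * (√((p - x) * (x - m)) / (w - x))
        - 1 / ((z - l) * (z - w)) * (√((p - x) * (x - m)) / (z - x))) (Ioo m p) := by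
    intro x hx
    have hxl : x - l ≠ 0 := by linarith [hx.1]
    have hxw : w - x ≠ 0 := by linarith [hx.2]
    have hxz : z - x ≠ 0 := by linarith [hx.2]
    field_simp
    ring
  have hil := intervalIntegrable_sqrt_div_sub_of_le_left hmp hl
  have hiw := intervalIntegrable_sqrt_div_sub hmp hw
  have hiz := intervalIntegrable_sqrt_div_sub hmp hz
  rw [intervalIntegral.integral_congr_Ioo_of_le hmp partial_fractions,
    intervalIntegral.integral_sub ((hil.const_mul _).add (hiw.const_mul _)) (hiz.const_mul _),
    intervalIntegral.integral_add (hil.const_mul _) (hiw.const_mul _)]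
  simp only [intervalIntegral.integral_const_mul]
  rw [integral_sqrt_div_sub_of_le_left hmp hl, integral_sqrt_div_sub hmp hw,
    integral_sqrt_div_sub hmp hz]
  field_simp
  ring

end Semicircle

section Wachter

/-- The left edge `μ₋` of the support of the Wachter law with parameters `a`, `b`. -/
noncomputable def wachterLeftEdge (a b : ℝ) : ℝ := ((√b - √(a * (a + b - 1))) / (a + b)) ^ 2

/-- The right edge `μ₊` of the support of the Wachter law with parameters `a`, `b`. -/
noncomputable def wachterRightEdge (a b : ℝ) : ℝ := ((√b + √(a * (a + b - 1))) / (a + b)) ^ 2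

/-- The density of the absolutely continuous part of the Wachter law, on its support
`[μ₋, μ₊]`. For `a < 1` or `b < 1` the law also has an atom, at `0` or `1` respectively. -/
noncomputable def wachterDensity (a b x : ℝ) : ℝ :=
  (a + b) * √((wachterRightEdge a b - x) * (x - wachterLeftEdge a b)) / (2 * π * x * (1 - x))

variable {a b : ℝ}

theorem wachterLeftEdge_nonneg (a b : ℝ) : 0 ≤ wachterLeftEdge a b := sq_nonneg _

theorem wachterLeftEdge_le_wachterRightEdge (a b : ℝ) :
    wachterLeftEdge a b ≤ wachterRightEdge a b := by
  rw [wachterLeftEdge, wachterRightEdge, div_pow, div_pow]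
  gcongr ?_ / _
  nlinarith [mul_nonneg (sqrt_nonneg b) (sqrt_nonneg (a * (a + b - 1)))]

theorem wachterRightEdge_le_one (ha : 0 ≤ a) (hb : 0 ≤ b) (hab : 1 ≤ a + b) :
    wachterRightEdge a b ≤ 1 := by
  have cauchy_schwarz : (√b + √a * √(a + b - 1)) ^ 2 ≤ (a + b) ^ 2 := by
    have hsa := sq_sqrt ha
    have hsb := sq_sqrt hb
    have hsc := sq_sqrt (sub_nonneg.2 hab)
    calc (√b + √a * √(a + b - 1)) ^ 2
        ≤ (√b + √a * √(a + b - 1)) ^ 2 + (√a - √b * √(a + b - 1)) ^ 2 :=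
          le_add_of_nonneg_right (sq_nonneg _)
      _ = (√a ^ 2 + √b ^ 2) * (1 + √(a + b - 1) ^ 2) := by ring
      _ = (a + b) ^ 2 := by rw [hsa, hsb, hsc]; ring
  rw [wachterRightEdge, sqrt_mul ha, div_pow]
  exact div_le_one_of_le₀ cauchy_schwarz (sq_nonneg _)

theorem sub_wachterLeftEdge_mul_sub_wachterRightEdge (ha : 0 ≤ a) (hb : 0 ≤ b) (hab : 1 ≤ a + b)
    (w : ℝ) :
    (w - wachterLeftEdge a b) * (w - wachterRightEdge a b)
      = ((a + 1 - (a + b) * w) ^ 2 - 4 * a * (1 - w)) / (a + b) ^ 2 := by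
  have hab₀ : a + b ≠ 0 := by linarith
  have hsb := sq_sqrt hb
  have hsd := sq_sqrt (mul_nonneg ha (sub_nonneg.2 hab))
  have hsum : wachterLeftEdge a b + wachterRightEdge a b
      = 2 * (b + a * (a + b - 1)) / (a + b) ^ 2 := by
    rw [wachterLeftEdge, wachterRightEdge]
    field_simp
    linear_combination 2 * hsb + 2 * hsd
  have hprod : wachterLeftEdge a b * wachterRightEdge a b = ((a - 1) / (a + b)) ^ 2 := by
    have hconj : (√b - √(a * (a + b - 1))) * (√b + √(a * (a + b - 1)))
        = -((a - 1) * (a + b)) := by linear_combination hsb - hsd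
    rw [wachterLeftEdge, wachterRightEdge, ← mul_pow, div_mul_div_comm, hconj]
    field_simp
  calc (w - wachterLeftEdge a b) * (w - wachterRightEdge a b)
      = w ^ 2 - (wachterLeftEdge a b + wachterRightEdge a b) * w
        + wachterLeftEdge a b * wachterRightEdge a b := by ring
    _ = ((a + 1 - (a + b) * w) ^ 2 - 4 * a * (1 - w)) / (a + b) ^ 2 := by
      rw [hsum, hprod]
      field_simp
      ring

theorem sqrt_sub_wachterLeftEdge_mul_sub_wachterRightEdge (ha : 0 ≤ a) (hb : 0 ≤ b)
    (hab : 1 ≤ a + b) (w : ℝ) :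
    √((w - wachterLeftEdge a b) * (w - wachterRightEdge a b))
      = √((a + 1 - (a + b) * w) ^ 2 - 4 * a * (1 - w)) / (a + b) := by
  rw [sub_wachterLeftEdge_mul_sub_wachterRightEdge ha hb hab, sqrt_div' _ (sq_nonneg _),
    sqrt_sq (by linarith)]

theorem sqrt_wachterLeftEdge_mul_wachterRightEdge (ha : 0 ≤ a) (hb : 0 ≤ b) (hab : 1 ≤ a + b) :
    √(wachterLeftEdge a b * wachterRightEdge a b) = |a - 1| / (a + b) := by
  have h := sqrt_sub_wachterLeftEdge_mul_sub_wachterRightEdge ha hb hab 0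
  rw [zero_sub, zero_sub, neg_mul_neg] at h
  rw [h, ← sqrt_sq_eq_abs]
  ring_nf

theorem sqrt_one_sub_wachterLeftEdge_mul_one_sub_wachterRightEdge (ha : 0 ≤ a) (hb : 0 ≤ b)
    (hab : 1 ≤ a + b) :
    √((1 - wachterLeftEdge a b) * (1 - wachterRightEdge a b)) = |b - 1| / (a + b) := by
  rw [sqrt_sub_wachterLeftEdge_mul_sub_wachterRightEdge ha hb hab, ← sqrt_sq_eq_abs]
  ring_nf

theorem wachter_cauchy_transform_general (ha : 0 ≤ a) (hb : 0 ≤ b) (hab : 1 ≤ a + b) {z : ℝ}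
    (hz : wachterRightEdge a b ≤ z) (hz₀ : z ≠ 0) (hz₁ : z ≠ 1) :
    ∫ x in wachterLeftEdge a b..wachterRightEdge a b, (1 / (z - x)) * wachterDensity a b x
      = (|b - 1| * z - |a - 1| * (1 - z)
          - √((a + 1 - (a + b) * z) ^ 2 - 4 * a * (1 - z))) / (2 * z * (1 - z)) := by
  have hab₀ : a + b ≠ 0 := by linarith
  have hsub_one : z - 1 ≠ 0 := sub_ne_zero.2 hz₁
  have hone_sub : 1 - z ≠ 0 := sub_ne_zero.2 hz₁.symm
  have integrand_eq : ∀ x, (1 / (z - x)) * wachterDensity a b x = (a + b) / (2 * π) *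
      (√((wachterRightEdge a b - x) * (x - wachterLeftEdge a b))
        / ((x - 0) * (1 - x) * (z - x))) := fun x ↦ by
    rw [wachterDensity, sub_zero, div_mul_div_comm, div_mul_div_comm]
    ring_nf
  simp only [integrand_eq]
  rw [intervalIntegral.integral_const_mul,
    integral_sqrt_div_mul_mul (wachterLeftEdge_le_wachterRightEdge a b)
      (wachterLeftEdge_nonneg a b) (wachterRightEdge_le_one ha hb hab) hz zero_ne_one hz₀.symm
      hz₁.symm,
    sqrt_sub_wachterLeftEdge_mul_sub_wachterRightEdge ha hb hab z,
    sqrt_one_sub_wachterLeftEdge_mul_one_sub_wachterRightEdge ha hb hab,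
    zero_sub, zero_sub, neg_mul_neg, sqrt_wachterLeftEdge_mul_wachterRightEdge ha hb hab,
    sub_zero, sub_zero]
  field_simp
  ring

end Wachter

/-- The Cauchy transform of the Wachter law. -/
theorem wachter_cauchy_transform (a b : ℝ) (ha : 1 ≤ a) (hb : 1 ≤ b) (μm μp : ℝ)
    (hμm : μm = ((Real.sqrt b - Real.sqrt (a * (a + b - 1))) / (a + b)) ^ 2)
    (hμp : μp = ((Real.sqrt b + Real.sqrt (a * (a + b - 1))) / (a + b)) ^ 2)
    (z : ℝ) (hz : 1 < z) :
    ∫ x in μm..μp,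
        (1 / (z - x)) * ((a + b) * Real.sqrt ((μp - x) * (x - μm)) / (2 * π * x * (1 - x)))
      = (1 - a + (a + b - 2) * z -
          Real.sqrt ((a + 1 - (a + b) * z) ^ 2 - 4 * a * (1 - z))) / (2 * z * (1 - z)) := by
  subst hμm hμp
  have ha₀ : 0 ≤ a := by linarith
  have hb₀ : 0 ≤ b := by linarith
  have hab : 1 ≤ a + b := by linarith
  refine (wachter_cauchy_transform_general ha₀ hb₀ hab
    ((wachterRightEdge_le_one ha₀ hb₀ hab).trans hz.le) (by linarith) hz.ne').trans ?_
  rw [abs_of_nonneg (sub_nonneg.2 ha), abs_of_nonneg (sub_nonneg.2 hb)]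
  ring
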